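/- Let a ≥ 1 and b, c ≥ 0 be integers and let n ≥ 1 be an integer with a + b + c ≥ n − 1. Then the underlying undirected graph of the finite quadratic Jaco graph J_n(f) with incidence function f(x) = a·x² + b·x + c is the complete graph K_n. -/

import Mathlib

/-- In-degree of vertex `v_j` in the (root) Jaco graph with incidence function `f`:
`d⁻(v_j) = |{ i : 1 ≤ i < j, i + f i − d⁻(v_i) ≥ j }|`. -/
noncomputable def jacoIn (f : ℕ → ℕ) (j : ℕ) : ℕ :=
  Nat.strongRecOn j (fun j ih =>
    (((Finset.Ico 1 j).attach).filter (fun i : {x // x ∈ Finset.Ico 1 j} =>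
      j ≤ i.1 + f i.1 - ih i.1 (Finset.mem_Ico.mp i.2).2)).card)

/-- The arc `(v_i, v_j)` is present in the Jaco graph iff `1 ≤ i < j` and
`i + f i − d⁻(v_i) ≥ j`. -/
def jacoArc (f : ℕ → ℕ) (i j : ℕ) : Prop :=
  1 ≤ i ∧ i < j ∧ j ≤ i + f i - jacoIn f i

noncomputable instance (f : ℕ → ℕ) (i j : ℕ) : Decidable (jacoArc f i j) := by
  unfold jacoArc; infer_instance

/-- The underlying undirected simple graph `J*_n(f)` of the finite Jaco graph `J_n(f)`,
on vertex set `{v_1, …, v_n}` (vertex `x : Fin n` represents `v_{x+1}`). -/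
def jacoGraph (f : ℕ → ℕ) (n : ℕ) : SimpleGraph (Fin n) :=
  SimpleGraph.fromRel (fun x y => jacoArc f (x.1 + 1) (y.1 + 1))

noncomputable instance (f : ℕ → ℕ) (n : ℕ) : DecidableRel (jacoGraph f n).Adj := fun x y =>
  decidable_of_iff
    (x ≠ y ∧ (jacoArc f (x.1 + 1) (y.1 + 1) ∨ jacoArc f (y.1 + 1) (x.1 + 1)))
    (by unfold jacoGraph; exact (SimpleGraph.fromRel_adj (fun a b : Fin n => jacoArc f (a.1 + 1) (b.1 + 1)) x y).symm)

theorem jacoIn_le_aux (f : ℕ → ℕ) (j : ℕ) : jacoIn f j ≤ j - 1 := by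
  unfold jacoIn
  rw [Nat.strongRecOn_eq]
  refine (Finset.card_filter_le _ _).trans ?_
  simp

theorem quadratic_arc_aux (a b c n i j : ℕ) (h : n - 1 ≤ a + b + c) (hi : 1 ≤ i)
    (hij : i < j) (hj : j ≤ n) : jacoArc (fun x => a * x ^ 2 + b * x + c) i j := by
  refine ⟨hi, hij, ?_⟩
  have h1 := jacoIn_le_aux (fun x => a * x ^ 2 + b * x + c) i
  have h2 : a ≤ a * i ^ 2 := Nat.le_mul_of_pos_right a (by positivity)
  have h3 : b ≤ b * i := Nat.le_mul_of_pos_right b hi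
  dsimp only
  omega

/-- If `a ≥ 1`, `b, c ≥ 0` and `a + b + c ≥ n − 1` (and `n ≥ 1`), the
underlying graph of the finite quadratic Jaco graph `J_n(f)` with `f(x) = a·x² + b·x + c`
is the complete graph `K_n`. -/
theorem quadratic_jaco_graph_complete (a b c n : ℕ) (ha : 1 ≤ a) (hn : 1 ≤ n)
    (h : n - 1 ≤ a + b + c) :
    jacoGraph (fun x => a * x ^ 2 + b * x + c) n = (⊤ : SimpleGraph (Fin n)) := by
  ext x y
  unfold jacoGraph
  rw [SimpleGraph.fromRel_adj, SimpleGraph.top_adj]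
  refine ⟨fun hxy => hxy.1, fun hxy => ⟨hxy, ?_⟩⟩
  have hx := x.2
  have hy := y.2
  have hne : x.1 ≠ y.1 := fun e => hxy (Fin.ext e)
  rcases lt_or_gt_of_ne hne with hlt | hlt
  · exact Or.inl (quadratic_arc_aux a b c n _ _ h (by omega) (by omega) (by omega))
  · exact Or.inr (quadratic_arc_aux a b c n _ _ h (by omega) (by omega) (by omega))
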